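/- The entire function Z₁(s) has no zero in the region 1/2 < Re(s) < 20, |Im(s)| ≥ 25; that is, for every complex s with 1/2 < Re(s) < 20 and |Im(s)| ≥ 25 one has Z₁(s) ≠ 0. -/

import Mathlib

open Complex

noncomputable def chi (s : ℂ) : ℂ := s * (s - 1) * completedRiemannZeta₀ s + 1

noncomputable def A : ℂ := Real.pi / 3 - 1

noncomputable def f1 (s : ℂ) : ℂ :=
  (s - 1) * ((s - 1) * (3 * s - 2) * (A * s - A + 1) * chi (s + 1) * chi (3 * s)
    - (s + 1) * (s - 2) * chi s * chi (3 * s - 1)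
    - 2 * (s - 1) * (s - 2) * chi s * chi (3 * s))

noncomputable def f2 (s : ℂ) : ℂ :=
  (s - 2) * ((A * s + 3) * (s - 1) ^ 2 * chi (s + 2)
    - 2 * (s - 1) * (s - 3) * chi (s + 1)
    - (s + 2) * (s - 3) * chi s)

noncomputable def Z1 (s : ℂ) : ℂ := chi (2 * s) * f1 s - chi (2 * s - 1) * f1 (1 - s)

noncomputable def Z2 (s : ℂ) : ℂ := chi (2 * s) * f2 s - chi (2 * s - 1) * f2 (1 - s)


open Set Filter Topology MeasureTheory ComplexConjugate

lemma chi_one_sub (s : ℂ) : chi (1 - s) = chi s := by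
  unfold chi; rw [completedRiemannZeta₀_one_sub]; ring

lemma chi_differentiable : Differentiable ℂ chi := by
  have := differentiable_completedZeta₀
  unfold chi; fun_prop

lemma chi_eq {s : ℂ} (h0 : s ≠ 0) (h1 : s ≠ 1) :
    chi s = s * (s - 1) * completedRiemannZeta s := by
  rw [completedRiemannZeta_eq, chi]
  have : s - 1 ≠ 0 := sub_ne_zero.2 h1
  have : 1 - s ≠ 0 := sub_ne_zero.2 h1.symm
  field_simp
  ring

lemma chi_eq' {s : ℂ} (h0 : s ≠ 0) (h1 : s ≠ 1) (hG : Gammaℝ s ≠ 0) :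
    chi s = s * (s - 1) * (Gammaℝ s * riemannZeta s) := by
  rw [chi_eq h0 h1, riemannZeta_def_of_ne_zero h0]
  field_simp

lemma chi_ne_zero {s : ℂ} (hs : 1 ≤ s.re) : chi s ≠ 0 := by
  by_cases h1 : s = 1
  · subst h1; simp [chi]
  have h0 : s ≠ 0 := by rintro rfl; simp at hs; linarith
  have hG : Gammaℝ s ≠ 0 := Gammaℝ_ne_zero_of_re_pos (by linarith)
  rw [chi_eq' h0 h1 hG]
  have := riemannZeta_ne_zero_of_one_le_re hs
  have : s - 1 ≠ 0 := sub_ne_zero.2 h1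
  positivity

lemma f_modif_conj (x : ℝ) : conj ((HurwitzZeta.hurwitzEvenFEPair 0).f_modif x)
    = (HurwitzZeta.hurwitzEvenFEPair 0).f_modif x := by
  simp only [WeakFEPair.f_modif, Pi.add_apply, map_add, Set.indicator]
  congr 1
  · split_ifs <;> simp [HurwitzZeta.hurwitzEvenFEPair]
  · split_ifs <;> simp [HurwitzZeta.hurwitzEvenFEPair]

lemma cz0_eq (s : ℂ) : completedRiemannZeta₀ s =
    mellin (HurwitzZeta.hurwitzEvenFEPair 0).f_modif (s / 2) / 2 := rfl

lemma chi_conj (s : ℂ) : chi (conj s) = conj (chi s) := by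
  have : completedRiemannZeta₀ (conj s) = conj (completedRiemannZeta₀ s) := by
    rw [cz0_eq, cz0_eq, map_div₀, map_ofNat]
    congr 1
    unfold mellin
    rw [← integral_conj]
    refine setIntegral_congr_fun measurableSet_Ioi fun x hx => ?_
    simp only [smul_eq_mul, map_mul, f_modif_conj]
    congr 1
    have := Complex.cpow_conj (x : ℂ) (s / 2 - 1) (by
      rw [Complex.arg_ofReal_of_nonneg (le_of_lt hx)]; exact Real.pi_pos.ne)
    rw [conj_ofReal] at this
    rw [← this, map_sub, map_div₀, map_ofNat, map_one]
  simp [chi, this]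

lemma norm_chi_conj (s : ℂ) : ‖chi (conj s)‖ = ‖chi s‖ := by
  rw [chi_conj, Complex.norm_conj]

lemma cz0_bound (b : ℝ) : ∃ C : ℝ, 0 ≤ C ∧ ∀ s : ℂ, |s.re| ≤ b →
    ‖completedRiemannZeta₀ s‖ ≤ C := by
  set P := HurwitzZeta.hurwitzEvenFEPair 0 with hP
  have hconv : ∀ s : ℂ, MellinConvergent P.f_modif s := fun s =>
    (P.isStrongFEPair_toStrongFEPair.hasMellin s).1
  have h1 := (hconv ((b / 2 : ℝ) : ℂ)).norm
  have h2 := (hconv ((-b / 2 : ℝ) : ℂ)).norm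
  have h12 := h1.add h2
  refine ⟨∫ x in Ioi (0:ℝ), (‖(x : ℂ) ^ (((b / 2 : ℝ) : ℂ) - 1) • P.f_modif x‖ +
    ‖(x : ℂ) ^ (((-b / 2 : ℝ) : ℂ) - 1) • P.f_modif x‖), integral_nonneg fun _ => by
      dsimp only [Pi.zero_apply]; positivity, fun s hs => ?_⟩
  rw [cz0_eq, norm_div]
  have : ‖mellin P.f_modif (s / 2)‖ ≤ ∫ x in Ioi (0:ℝ),
    (‖(x : ℂ) ^ (((b / 2 : ℝ) : ℂ) - 1) • P.f_modif x‖ +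
    ‖(x : ℂ) ^ (((-b / 2 : ℝ) : ℂ) - 1) • P.f_modif x‖) := by
    unfold mellin
    refine norm_integral_le_of_norm_le h12 ?_
    refine (ae_restrict_iff' measurableSet_Ioi).2 (ae_of_all _ fun x (hx : 0 < x) => ?_)
    simp only [norm_smul, ← add_mul]
    gcongr
    rw [Complex.norm_cpow_eq_rpow_re_of_pos hx, Complex.norm_cpow_eq_rpow_re_of_pos hx,
      Complex.norm_cpow_eq_rpow_re_of_pos hx]
    have e1 : (s / 2 - 1).re = s.re / 2 - 1 := by simp
    have e2 : ((((b / 2 : ℝ) : ℂ)) - 1).re = b / 2 - 1 := by simp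
    have e3 : ((((-b / 2 : ℝ) : ℂ)) - 1).re = -b / 2 - 1 := by simp
    rw [e1, e2, e3]
    have hb := abs_le.1 hs
    rcases le_total 1 x with h | h
    · have := Real.rpow_le_rpow_of_exponent_le h (show s.re / 2 - 1 ≤ b / 2 - 1 by linarith)
      have := Real.rpow_nonneg hx.le (-b / 2 - 1)
      linarith
    · have := Real.rpow_le_rpow_of_exponent_ge hx h (show -b / 2 - 1 ≤ s.re / 2 - 1 by linarith)
      have := Real.rpow_nonneg hx.le (b / 2 - 1)
      linarith
  have h2 : ‖(2:ℂ)‖ = 2 := by simp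
  rw [h2]
  have := norm_nonneg (mellin P.f_modif (s / 2))
  linarith

lemma chi_bound (b : ℝ) : ∃ C : ℝ, 1 ≤ C ∧ ∀ s : ℂ, |s.re| ≤ b →
    ‖chi s‖ ≤ C * Real.exp (2 * |s.im|) := by
  obtain ⟨C, hC, h⟩ := cz0_bound b
  refine ⟨(1 + |b|) ^ 2 * 4 * C + 1, by nlinarith [mul_nonneg (sq_nonneg (1+|b|)) hC], fun s hs => ?_⟩
  have hn : ‖s‖ ≤ (1 + |b|) * Real.exp |s.im| := by
    have h1 := Complex.norm_le_abs_re_add_abs_im s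
    have h2 := Real.add_one_le_exp |s.im|
    have h3 := le_abs_self b
    have h4 := abs_nonneg s.im
    have h5 := abs_nonneg b
    nlinarith
  have h1e : 1 ≤ Real.exp |s.im| := Real.one_le_exp (abs_nonneg _)
  have hn' : ‖s - 1‖ ≤ 2 * (1 + |b|) * Real.exp |s.im| := by
    have := norm_sub_le s 1
    have h5 := abs_nonneg b
    simp only [norm_one] at this
    nlinarith
  have e : Real.exp (2 * |s.im|) = Real.exp |s.im| * Real.exp |s.im| := by
    rw [← Real.exp_add]; ring_nf
  unfold chi
  calc ‖s * (s - 1) * completedRiemannZeta₀ s + 1‖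
      ≤ ‖s‖ * ‖s - 1‖ * ‖completedRiemannZeta₀ s‖ + 1 := by
        refine (norm_add_le _ _).trans ?_
        simp
    _ ≤ ((1 + |b|) * Real.exp |s.im|) * (2 * (1 + |b|) * Real.exp |s.im|) * C + 1 := by
        gcongr
        exact h s hs
    _ ≤ _ := by
        rw [e]
        have : 0 ≤ (1 + |b|) ^ 2 * C := by positivity
        nlinarith [mul_nonneg this (mul_self_nonneg (Real.exp |s.im|))]

noncomputable def Zr (x : ℝ) : ℝ := ∑' n : ℕ, (if n = 0 then 0 else 1 / (n : ℝ) ^ x)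

lemma norm_term_one (s : ℂ) (n : ℕ) : ‖LSeries.term 1 s n‖ =
    (if n = 0 then 0 else 1 / (n : ℝ) ^ s.re) := by
  rw [LSeries.norm_term_eq]; simp

lemma Zr_summable {s : ℂ} (hs : 1 < s.re) :
    Summable (fun n : ℕ => (if n = 0 then 0 else 1 / (n : ℝ) ^ s.re)) := by
  have := (LSeriesSummable_one_iff.mpr hs).norm
  simpa only [norm_term_one] using this

lemma norm_zeta_le {s : ℂ} (hs : 1 < s.re) : ‖riemannZeta s‖ ≤ Zr s.re := by
  rw [← LSeries_one_eq_riemannZeta hs]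
  unfold LSeries Zr
  refine tsum_of_norm_bounded (Zr_summable hs).hasSum fun n => ?_
  rw [norm_term_one]

lemma norm_zeta_ge {s : ℂ} (hs : 1 < s.re) : 1 ≤ ‖riemannZeta s‖ * Zr s.re := by
  have h := LSeries_one_mul_Lseries_moebius hs
  rw [LSeries_one_eq_riemannZeta hs] at h
  have h2 : ‖LSeries (fun n => ((ArithmeticFunction.moebius n : ℤ) : ℂ)) s‖ ≤ Zr s.re := by
    unfold LSeries Zr
    refine tsum_of_norm_bounded (Zr_summable hs).hasSum fun n => ?_
    rw [← norm_term_one]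
    apply LSeries.norm_term_le
    simp only [Pi.one_apply, norm_one]
    rw [Complex.norm_intCast]
    exact_mod_cast ArithmeticFunction.abs_moebius_le_one
  calc (1:ℝ) = ‖riemannZeta s‖ * ‖LSeries (fun n => ((ArithmeticFunction.moebius n : ℤ) : ℂ)) s‖ := by
        rw [← norm_mul, h, norm_one]
    _ ≤ _ := by gcongr

lemma Zr_eq {x : ℝ} (hx : 1 < x) : Zr x = ‖riemannZeta x‖ := by
  have hs : 1 < (x : ℂ).re := by simpa
  have : (Zr x : ℂ) = riemannZeta x := by
    rw [← LSeries_one_eq_riemannZeta hs]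
    unfold LSeries Zr
    rw [Complex.ofReal_tsum]
    congr 1
    ext n
    rw [LSeries.term_def]
    split_ifs with h
    · simp
    · simp [Complex.ofReal_cpow]
  rw [← this, Complex.norm_real, Real.norm_eq_abs, abs_of_nonneg]
  exact tsum_nonneg fun n => by split_ifs <;> positivity

lemma Zr_four : Zr 4 = Real.pi ^ 4 / 90 := by
  have h := hasSum_zeta_four.tsum_eq
  unfold Zr
  rw [← h]
  congr 1
  ext n
  split_ifs with h
  · simp [h]
  · norm_cast

lemma Zr_le {x : ℝ} (hx : 4 ≤ x) : Zr x ≤ 10824 / 10000 := by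
  have h1 : Zr x ≤ Zr 4 := by
    unfold Zr
    have e : ∀ y : ℝ, 1 < y → Summable (fun n : ℕ => (if n = 0 then 0 else 1 / (n : ℝ) ^ y)) := by
      intro y hy
      simpa using Zr_summable (s := (y : ℂ)) (by simpa)
    refine Summable.tsum_le_tsum (fun n => ?_) (e x (by linarith)) (e 4 (by norm_num))
    split_ifs with h
    · exact le_rfl
    · have hn : (1:ℝ) ≤ n := by exact_mod_cast Nat.one_le_iff_ne_zero.2 h
      gcongr
  rw [Zr_four] at h1
  have h2 : Real.pi < 3.1416 := Real.pi_lt_d4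
  have h3 : Real.pi ^ 4 ≤ 3.1416 ^ 4 := by gcongr
  norm_num at h3 ⊢
  linarith

lemma Zr_pole : ∃ C : ℝ, 1 ≤ C ∧ ∀ x : ℝ, 1 < x → x ≤ 22 → (x - 1) * Zr x ≤ C := by
  have hc : ContinuousOn (fun x : ℝ => ‖chi x / (x * Gammaℝ x)‖) (Icc 1 22) := by
    have h1 := chi_differentiable.continuous
    have h2 := differentiable_Gammaℝ_inv.continuous
    have : (fun x : ℝ => ‖chi x / (x * Gammaℝ x)‖) =
      fun x : ℝ => ‖chi x‖ * |x|⁻¹ * ‖(Gammaℝ x)⁻¹‖ := by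
      ext x; simp; ring
    rw [this]
    have h3 : ContinuousOn (fun x : ℝ => |x|⁻¹) (Icc 1 22) := by
      apply ContinuousOn.inv₀ (by fun_prop)
      intro x hx
      have := hx.1
      positivity
    refine ContinuousOn.mul (ContinuousOn.mul ?_ h3) ?_
    · exact (h1.comp continuous_ofReal).norm.continuousOn
    · exact (h2.comp continuous_ofReal).norm.continuousOn
  obtain ⟨C, hC⟩ := isCompact_Icc.exists_bound_of_continuousOn hc
  refine ⟨max C 1, le_max_right _ _, fun x h1 h2 => ?_⟩
  have := hC x ⟨h1.le, h2⟩
  refine le_trans ?_ (this.trans (le_max_left _ _))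
  rw [norm_norm]
  have hx0 : (x : ℂ) ≠ 0 := by norm_cast; linarith
  have hx1 : (x : ℂ) ≠ 1 := by norm_cast; linarith
  have hG : Gammaℝ x ≠ 0 := Gammaℝ_ne_zero_of_re_pos (by simp; linarith)
  rw [chi_eq' hx0 hx1 hG, Zr_eq h1]
  have : (x:ℂ) * (x - 1) * (Gammaℝ x * riemannZeta x) / (x * Gammaℝ x) = ((x - 1 : ℝ) : ℂ) * riemannZeta x := by
    push_cast; field_simp
  rw [this, norm_mul, Complex.norm_real, Real.norm_eq_abs, abs_of_pos (by linarith)]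

-- Gamma ratio
lemma half_step {u : ℂ} (hu : 0 < u.re) :
    ‖u + 1 / 2‖ ^ 2 ≤ ‖u‖ * ‖u + 1‖ * Real.exp (1 / 4 * (1 / u.re - 1 / (u.re + 1))) := by
  have h1 : ‖u + 1 / 2‖ ^ 2 ≤ ‖u‖ * ‖u + 1‖ + 1 / 4 := by
    rw [← norm_pow, ← norm_mul]
    have : (u + 1 / 2) ^ 2 = u * (u + 1) + 1 / 4 := by ring
    rw [this]
    refine (norm_add_le _ _).trans ?_
    norm_num
  have h2 : u.re ≤ ‖u‖ := Complex.re_le_norm u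
  have h3 : u.re + 1 ≤ ‖u + 1‖ := by simpa using Complex.re_le_norm (u + 1)
  have h4 : u.re * (u.re + 1) ≤ ‖u‖ * ‖u + 1‖ := by gcongr
  have h5 : 1 / u.re - 1 / (u.re + 1) = 1 / (u.re * (u.re + 1)) := by field_simp; ring
  rw [h5]
  have h6 := Real.add_one_le_exp (1 / 4 * (1 / (u.re * (u.re + 1))))
  have h7 : 0 < u.re * (u.re + 1) := by positivity
  calc ‖u + 1 / 2‖ ^ 2 ≤ ‖u‖ * ‖u + 1‖ + 1 / 4 := h1
    _ ≤ ‖u‖ * ‖u + 1‖ * (1 / 4 * (1 / (u.re * (u.re + 1))) + 1) := by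
        have : 1 ≤ ‖u‖ * ‖u + 1‖ * (1 / (u.re * (u.re + 1))) := by
          rw [mul_one_div, le_div_iff₀ h7]; linarith
        linarith
    _ ≤ _ := by gcongr

lemma prod_step {z : ℂ} (hz : 0 < z.re) (n : ℕ) :
    (∏ j ∈ Finset.range n, ‖z + 1 / 2 + j‖) ^ 2 * ‖z‖ ≤
    (∏ j ∈ Finset.range n, ‖z + j‖) ^ 2 * ‖z + n‖ *
      Real.exp (1 / 4 * (1 / z.re - 1 / (z.re + n))) := by
  induction n with
  | zero => simp
  | succ n ih =>
    rw [Finset.prod_range_succ, Finset.prod_range_succ]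
    have h := half_step (u := z + n) (by simp; positivity)
    have e1 : (z + n).re = z.re + n := by simp
    rw [e1] at h
    have e2 : z + 1 / 2 + n = z + n + 1 / 2 := by ring
    have e3 : z + ((n + 1 : ℕ) : ℂ) = z + n + 1 := by push_cast; ring
    have e4 : z.re + ((n + 1 : ℕ) : ℝ) = z.re + n + 1 := by push_cast; ring
    rw [e2, e3, e4]
    set a := ∏ j ∈ Finset.range n, ‖z + 1 / 2 + j‖
    set b := ∏ j ∈ Finset.range n, ‖z + j‖
    calc (a * ‖z + n + 1 / 2‖) ^ 2 * ‖z‖ = (a ^ 2 * ‖z‖) * ‖z + n + 1 / 2‖ ^ 2 := by ring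
      _ ≤ (b ^ 2 * ‖z + n‖ * Real.exp (1 / 4 * (1 / z.re - 1 / (z.re + n)))) *
          (‖z + n‖ * ‖z + n + 1‖ * Real.exp (1 / 4 * (1 / (z.re + n) - 1 / (z.re + n + 1)))) := by
          gcongr
      _ = (b * ‖z + n‖) ^ 2 * ‖z + n + 1‖ * (Real.exp (1 / 4 * (1 / z.re - 1 / (z.re + n))) *
          Real.exp (1 / 4 * (1 / (z.re + n) - 1 / (z.re + n + 1)))) := by ring
      _ = _ := by rw [← Real.exp_add]; congr 2; ring

lemma gamma_ratio {z : ℂ} (hz : 0 < z.re) :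
    ‖Gamma z‖ ^ 2 * ‖z‖ ≤ ‖Gamma (z + 1 / 2)‖ ^ 2 * Real.exp (1 / 4 * (1 / z.re)) := by
  have t1 : Tendsto (fun n : ℕ => ‖GammaSeq z n‖ ^ 2 * ‖z‖) atTop (𝓝 (‖Gamma z‖ ^ 2 * ‖z‖)) :=
    ((GammaSeq_tendsto_Gamma z).norm.pow 2).mul_const _
  have t3 : Tendsto (fun n : ℕ => ‖(z + 1) / n + 1‖) atTop (𝓝 1) := by
    have : Tendsto (fun n : ℕ => (z + 1) / n + 1) atTop (𝓝 (0 + 1)) :=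
      (tendsto_const_div_atTop_nhds_zero_nat (z + 1)).add_const _
    simpa using this.norm
  have t2 : Tendsto (fun n : ℕ => ‖GammaSeq (z + 1 / 2) n‖ ^ 2 * ‖(z + 1) / n + 1‖ *
      Real.exp (1 / 4 * (1 / z.re))) atTop
      (𝓝 (‖Gamma (z + 1 / 2)‖ ^ 2 * 1 * Real.exp (1 / 4 * (1 / z.re)))) :=
    (((GammaSeq_tendsto_Gamma (z + 1 / 2)).norm.pow 2).mul t3).mul_const _
  rw [mul_one] at t2
  refine le_of_tendsto_of_tendsto t1 t2 ?_
  filter_upwards [eventually_gt_atTop 0] with n hn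
  have hn' : (0:ℝ) < n := by exact_mod_cast hn
  have h := prod_step hz (n + 1)
  unfold GammaSeq
  simp only [norm_div, norm_mul, norm_prod]
  have e1 : ‖(n : ℂ) ^ z‖ = (n : ℝ) ^ z.re := by
    rw [← Complex.norm_cpow_eq_rpow_re_of_pos hn']; simp
  have e2 : ‖(n : ℂ) ^ (z + 1 / 2)‖ = (n : ℝ) ^ z.re * (n : ℝ) ^ (1 / 2 : ℝ) := by
    rw [← Real.rpow_add hn']
    have : (z + 1 / 2).re = z.re + 1 / 2 := by simp
    rw [← this, ← Complex.norm_cpow_eq_rpow_re_of_pos hn']; simp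
  have e3 : ((n : ℝ) ^ (1 / 2 : ℝ)) ^ 2 = n := by
    rw [← Real.sqrt_eq_rpow, Real.sq_sqrt hn'.le]
  rw [e1, e2]
  set a := ∏ j ∈ Finset.range (n + 1), ‖z + 1 / 2 + j‖
  set b := ∏ j ∈ Finset.range (n + 1), ‖z + j‖
  have hre : ∀ j : ℕ, 0 < ‖z + j‖ := fun j => by
    have := Complex.re_le_norm (z + j)
    simp at this
    have : (0:ℝ) ≤ j := by positivity
    linarith
  have hre' : ∀ j : ℕ, 0 < ‖z + 1 / 2 + j‖ := fun j => by
    have := Complex.re_le_norm (z + 1 / 2 + j)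
    simp at this
    have : (0:ℝ) ≤ j := by positivity
    linarith
  have hb : 0 < b := Finset.prod_pos fun j _ => hre j
  have ha : 0 < a := Finset.prod_pos fun j _ => hre' j
  have h' : a ^ 2 * ‖z‖ ≤ b ^ 2 * ‖z + (n + 1 : ℕ)‖ * Real.exp (1 / 4 * (1 / z.re)) := by
    refine h.trans ?_
    gcongr
    have : 0 ≤ 1 / (z.re + (n + 1 : ℕ)) := by positivity
    linarith
  have e5 : ‖(z + 1) / n + 1‖ = ‖z + (n + 1 : ℕ)‖ / n := by
    rw [← Complex.norm_natCast, ← norm_div]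
    congr 1
    have : (n : ℂ) ≠ 0 := by exact_mod_cast hn.ne'
    push_cast
    field_simp
    ring
  rw [e5, div_pow, div_pow, mul_pow, mul_pow, mul_pow, e3]
  set X := ((n : ℝ) ^ z.re) ^ 2
  have hX : 0 ≤ X := by positivity
  set F := ‖((Nat.factorial n : ℕ) : ℂ)‖ ^ 2
  have hF : 0 ≤ F := by positivity
  rw [div_mul_eq_mul_div, div_le_iff₀ (by positivity)]
  have : X * n * F / a ^ 2 * (‖z + (n + 1 : ℕ)‖ / n) * Real.exp (1 / 4 * (1 / z.re)) * b ^ 2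
    = X * F * (b ^ 2 * ‖z + (n + 1 : ℕ)‖ * Real.exp (1 / 4 * (1 / z.re))) / a ^ 2 := by
    field_simp
  rw [this, le_div_iff₀ (by positivity)]
  calc X * F * ‖z‖ * a ^ 2 = X * F * (a ^ 2 * ‖z‖) := by ring
    _ ≤ _ := by gcongr

lemma exp_eighth : Real.exp (1 / 8) ≤ 1.1334 := by
  have h := Real.exp_one_lt_d9
  have e : Real.exp (1 / 8) ^ 8 = Real.exp 1 := by rw [← Real.exp_nat_mul]; norm_num
  refine le_of_pow_le_pow_left₀ (n := 8) (by norm_num) (by norm_num) ?_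
  rw [e]
  refine h.le.trans ?_
  norm_num

lemma norm_Gammaℝ (s : ℂ) : ‖Gammaℝ s‖ = Real.pi ^ (-s.re / 2) * ‖Gamma (s / 2)‖ := by
  rw [Gammaℝ_def, norm_mul, Complex.norm_cpow_eq_rpow_re_of_pos Real.pi_pos]
  simp

lemma gammaR_ratio {w : ℂ} (hw : 5 ≤ w.re) :
    ‖Gammaℝ (w - 1)‖ ^ 2 * ‖w - 1‖ ≤ 7.13 * ‖Gammaℝ w‖ ^ 2 := by
  have hz : ((w - 1) / 2).re = (w.re - 1) / 2 := by simp
  have h := gamma_ratio (z := (w - 1) / 2) (by rw [hz]; linarith)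
  have e : (w - 1) / 2 + 1 / 2 = w / 2 := by ring
  rw [e, hz, norm_div] at h
  have h2 : Real.exp (1 / 4 * (1 / ((w.re - 1) / 2))) ≤ 1.1334 := by
    refine le_trans (Real.exp_le_exp.2 ?_) exp_eighth
    have : 1 / ((w.re - 1) / 2) ≤ 1 / 2 := by
      apply one_div_le_one_div_of_le <;> linarith
    linarith
  rw [norm_Gammaℝ, norm_Gammaℝ]
  have e3 : Real.pi ^ (-(w - 1).re / 2) = Real.pi ^ (-w.re / 2) * Real.pi ^ (1 / 2 : ℝ) := by
    rw [← Real.rpow_add Real.pi_pos]; congr 1; simp; ring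
  have e4 : (Real.pi ^ (1 / 2 : ℝ)) ^ 2 = Real.pi := by
    rw [← Real.sqrt_eq_rpow, Real.sq_sqrt Real.pi_pos.le]
  rw [e3, mul_pow, mul_pow, mul_pow, e4]
  set X := (Real.pi ^ (-w.re / 2)) ^ 2
  have hX : 0 ≤ X := by positivity
  have h5 : ‖Gamma ((w - 1) / 2)‖ ^ 2 * ‖w - 1‖ ≤ 2 * 1.1334 * ‖Gamma (w / 2)‖ ^ 2 := by
    have : ‖(2:ℂ)‖ = 2 := by simp
    rw [this] at h
    have := mul_le_mul_of_nonneg_left h2 (sq_nonneg ‖Gamma (w / 2)‖)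
    linarith
  have hpi := Real.pi_lt_d4
  have hpi0 := Real.pi_pos
  calc X * Real.pi * ‖Gamma ((w - 1) / 2)‖ ^ 2 * ‖w - 1‖
      = X * Real.pi * (‖Gamma ((w - 1) / 2)‖ ^ 2 * ‖w - 1‖) := by ring
    _ ≤ X * 3.1416 * (2 * 1.1334 * ‖Gamma (w / 2)‖ ^ 2) := by gcongr
    _ ≤ _ := by nlinarith [mul_nonneg hX (sq_nonneg ‖Gamma (w / 2)‖)]

lemma V_bound {w : ℂ} (hw : 5 ≤ w.re) : ‖chi (w - 1)‖ ^ 2 * ‖w - 1‖ ≤ 10 * ‖chi w‖ ^ 2 := by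
  have ne : ∀ u : ℂ, 1 < u.re → chi u = u * (u - 1) * (Gammaℝ u * riemannZeta u) := by
    intro u hu
    apply chi_eq'
    · rintro rfl; simp at hu; linarith
    · rintro rfl; simp at hu
    · exact Gammaℝ_ne_zero_of_re_pos (by linarith)
  have hre : (w - 1).re = w.re - 1 := by simp
  rw [ne w (by linarith), ne (w - 1) (by rw [hre]; linarith)]
  have e : w - 1 - 1 = w - 2 := by ring
  rw [e]
  simp only [norm_mul]
  have h1 := gammaR_ratio hw
  have h2 : ‖riemannZeta (w - 1)‖ ≤ 10824 / 10000 :=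
    (norm_zeta_le (by rw [hre]; linarith)).trans (Zr_le (by rw [hre]; linarith))
  have hZ : Zr w.re ≤ 10824 / 10000 := Zr_le (by linarith)
  have h3 : 1 ≤ ‖riemannZeta w‖ * (10824 / 10000) :=
    (norm_zeta_ge (s := w) (by linarith)).trans
      (mul_le_mul_of_nonneg_left hZ (norm_nonneg _))
  have h4 : ‖w - 2‖ ≤ ‖w‖ := by
    rw [← sq_le_sq₀ (norm_nonneg _) (norm_nonneg _), Complex.sq_norm, Complex.sq_norm,
      Complex.normSq_apply, Complex.normSq_apply]
    simp; nlinarith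
  have h5 : ‖riemannZeta (w - 1)‖ ≤ (10824 / 10000) ^ 2 * ‖riemannZeta w‖ := by
    nlinarith [norm_nonneg (riemannZeta w)]
  set p := ‖w - 1‖
  set G := ‖Gammaℝ w‖
  set z := ‖riemannZeta w‖
  calc (p * ‖w - 2‖ * (‖Gammaℝ (w - 1)‖ * ‖riemannZeta (w - 1)‖)) ^ 2 * p
      = p ^ 2 * ‖w - 2‖ ^ 2 * ‖riemannZeta (w - 1)‖ ^ 2 * (‖Gammaℝ (w - 1)‖ ^ 2 * p) := by ring
    _ ≤ p ^ 2 * ‖w‖ ^ 2 * ((10824 / 10000) ^ 2 * z) ^ 2 * (7.13 * G ^ 2) := by gcongr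
    _ = (7.13 * (10824 / 10000) ^ 4) * (‖w‖ * p * (G * z)) ^ 2 := by ring
    _ ≤ _ := by gcongr; norm_num

-- lower bound for Gamma
lemma norm_Gamma_le {s : ℂ} (hs : 0 < s.re) : ‖Gamma s‖ ≤ Real.Gamma s.re := by
  rw [Gamma_eq_integral hs, Real.Gamma_eq_integral hs, GammaIntegral]
  refine norm_integral_le_of_norm_le (Real.GammaIntegral_convergent hs) ?_
  refine (ae_restrict_iff' measurableSet_Ioi).2 (ae_of_all _ fun x (hx : 0 < x) => ?_)
  rw [norm_mul, Complex.norm_cpow_eq_rpow_re_of_pos hx, Complex.norm_real]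
  simp

lemma norm_Gamma_shift {u : ℂ} (hu : 1 ≤ |u.im|) (n : ℕ) : ‖Gamma u‖ ≤ ‖Gamma (u + n)‖ := by
  induction n with
  | zero => simp
  | succ n ih =>
    have h1 : 1 ≤ ‖u + n‖ := by
      have := Complex.abs_im_le_norm (u + n)
      simp at this
      linarith
    have h0 : u + n ≠ 0 := by intro h; rw [h] at h1; simp at h1; linarith
    have : u + ((n + 1 : ℕ) : ℂ) = u + n + 1 := by push_cast; ring
    rw [this, Gamma_add_one _ h0, norm_mul]
    nlinarith [norm_nonneg (Gamma (u + n))]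

lemma norm_sin_le (z : ℂ) : ‖Complex.sin z‖ ≤ Real.exp |z.im| := by
  have h1 : ‖Complex.exp (-z * I)‖ ≤ Real.exp |z.im| := by
    rw [Complex.norm_exp]; simp; exact le_abs_self _
  have h2 : ‖Complex.exp (z * I)‖ ≤ Real.exp |z.im| := by
    rw [Complex.norm_exp]; simp; exact neg_le_abs _
  rw [Complex.sin, norm_div, norm_mul]
  have := norm_sub_le (Complex.exp (-z * I)) (Complex.exp (z * I))
  simp only [norm_I, mul_one, Complex.norm_ofNat]
  linarith

lemma Gamma_lower : ∃ C : ℝ, 1 ≤ C ∧ ∀ z : ℂ, 1 / 2 ≤ z.re → z.re ≤ 11 → 1 ≤ |z.im| →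
    1 ≤ C * Real.exp (4 * |z.im|) * ‖Gamma z‖ := by
  have hc : ContinuousOn Real.Gamma (Icc 2 13) := by
    intro x hx
    exact (Real.differentiableAt_Gamma (fun m => by
      have := hx.1
      have : (0:ℝ) ≤ m := by positivity
      linarith)).continuousAt.continuousWithinAt
  obtain ⟨C, hC⟩ := isCompact_Icc.exists_bound_of_continuousOn hc
  refine ⟨max C 1, le_max_right _ _, fun z h1 h2 h3 => ?_⟩
  have hr := Gamma_mul_Gamma_one_sub z
  have hG : Gamma z ≠ 0 := Gamma_ne_zero_of_re_pos (by linarith)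
  have hG1 : ‖Gamma (1 - z)‖ ≤ max C 1 := by
    refine (norm_Gamma_shift (u := 1 - z) (by simpa using h3) 12).trans ?_
    have hre : (1 - z + (12 : ℕ)).re = 13 - z.re := by simp; ring
    refine (norm_Gamma_le (by rw [hre]; linarith)).trans ?_
    rw [hre]
    exact (le_abs_self _).trans ((hC (13 - z.re) ⟨by linarith, by linarith⟩).trans (le_max_left _ _))
  have hG1' : Gamma (1 - z) ≠ 0 := by
    apply Gamma_ne_zero
    intro m hm
    have := congrArg Complex.im hm
    simp at this
    rw [this] at h3
    simp at h3
    linarith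
  have hs : Complex.sin (Real.pi * z) ≠ 0 := by
    intro h
    rw [h] at hr
    simp at hr
    tauto
  have hk : (Real.pi : ℂ) = Gamma z * Gamma (1 - z) * Complex.sin (Real.pi * z) := by
    rw [hr]; field_simp
  have hk2 : Real.pi = ‖Gamma z‖ * ‖Gamma (1 - z)‖ * ‖Complex.sin (Real.pi * z)‖ := by
    rw [← norm_mul, ← norm_mul, ← hk]
    simp [abs_of_pos Real.pi_pos]
  have hsin : ‖Complex.sin (Real.pi * z)‖ ≤ Real.exp (4 * |z.im|) := by
    refine (norm_sin_le _).trans (Real.exp_le_exp.2 ?_)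
    have : ((Real.pi : ℂ) * z).im = Real.pi * z.im := by simp
    rw [this, abs_mul, abs_of_pos Real.pi_pos]
    gcongr
    exact Real.pi_le_four
  have : (1:ℝ) ≤ Real.pi := by linarith [Real.pi_gt_three]
  calc (1:ℝ) ≤ ‖Gamma z‖ * ‖Gamma (1 - z)‖ * ‖Complex.sin (Real.pi * z)‖ := by rw [← hk2]; exact this
    _ ≤ ‖Gamma z‖ * max C 1 * Real.exp (4 * |z.im|) := by gcongr
    _ = _ := by ring

lemma horiz_bound : ∃ C : ℝ, 1 ≤ C ∧ ∀ (a : ℝ), 1 ≤ a → a ≤ 2 → ∀ w : ℂ, 1 < w.re → w.re ≤ 22 →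
    2 ≤ |w.im| → ‖chi (w - a)‖ * (w.re - 1) ≤ C * Real.exp (4 * |w.im|) * ‖chi w‖ := by
  obtain ⟨C1, hC1, h1⟩ := chi_bound 22
  obtain ⟨C2, hC2, h2⟩ := Zr_pole
  obtain ⟨C3, hC3, h3⟩ := Gamma_lower
  refine ⟨C1 * C2 * C3 * Real.pi ^ (11:ℝ), ?_, fun a ha1 ha2 w hw1 hw2 hw3 => ?_⟩
  · have : 1 ≤ Real.pi ^ (11:ℝ) := Real.one_le_rpow (by linarith [Real.pi_gt_three]) (by norm_num)
    exact one_le_mul_of_one_le_of_one_le (one_le_mul_of_one_le_of_one_le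
      (one_le_mul_of_one_le_of_one_le hC1 hC2) hC3) this
  have hG0 : Gammaℝ w ≠ 0 := Gammaℝ_ne_zero_of_re_pos (by linarith)
  have hw0 : w ≠ 0 := by rintro rfl; simp at hw1; linarith
  have hw1' : w ≠ 1 := by rintro rfl; simp at hw1
  have k1 : ‖chi (w - a)‖ ≤ C1 * Real.exp (2 * |w.im|) := by
    have := h1 (w - a) (by simp; rw [abs_le]; constructor <;> linarith)
    simpa using this
  have k2 := h2 w.re hw1 hw2
  have k3 := h3 (w / 2) (by simp; linarith) (by simp; linarith) (by
    simp [abs_div]; linarith)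
  have e1 : |(w / 2).im| = |w.im| / 2 := by simp [abs_div]
  rw [e1] at k3
  have k4 := norm_zeta_ge hw1
  have k5 : 1 ≤ ‖w‖ := by
    have := Complex.abs_im_le_norm w; linarith
  have k6 : 1 ≤ ‖w - 1‖ := by
    have := Complex.abs_im_le_norm (w - 1); simp at this; linarith
  have k7 : 1 ≤ Real.pi ^ (11:ℝ) * Real.pi ^ (-w.re / 2) := by
    rw [← Real.rpow_add Real.pi_pos]
    exact Real.one_le_rpow (by linarith [Real.pi_gt_three]) (by linarith)
  have e2 : Real.exp (4 * |w.im|) = Real.exp (2 * |w.im|) * Real.exp (4 * (|w.im| / 2)) := by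
    rw [← Real.exp_add]; congr 1; ring
  rw [chi_eq' hw0 hw1' hG0, norm_mul, norm_mul, norm_mul, norm_Gammaℝ, e2]
  set E2 := Real.exp (2 * |w.im|)
  set E4 := Real.exp (4 * (|w.im| / 2))
  set P1 := Real.pi ^ (11:ℝ)
  set P2 := Real.pi ^ (-w.re / 2)
  set z := ‖riemannZeta w‖
  set G := ‖Gamma (w / 2)‖
  have hZ : w.re - 1 ≤ C2 * z := by
    have : 0 ≤ z := norm_nonneg _
    nlinarith
  have one : 1 ≤ ‖w‖ * ‖w - 1‖ := one_le_mul_of_one_le_of_one_le k5 k6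
  have hmm : 1 ≤ (C3 * E4 * G) * (P1 * P2) * (‖w‖ * ‖w - 1‖) :=
    one_le_mul_of_one_le_of_one_le (one_le_mul_of_one_le_of_one_le k3 k7) one
  have hp : 0 ≤ C1 * E2 * (C2 * z) := by positivity
  calc ‖chi (w - a)‖ * (w.re - 1) ≤ (C1 * E2) * (C2 * z) := by
        apply mul_le_mul k1 hZ (by linarith) (by positivity)
    _ ≤ (C1 * E2) * (C2 * z) * ((C3 * E4 * G) * (P1 * P2) * (‖w‖ * ‖w - 1‖)) :=
        le_mul_of_one_le_right hp hmm
    _ = _ := by ring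

lemma rect_max {g : ℂ → ℂ} {a b c d : ℝ} (hab : a < b) (hcd : c < d)
    (hg : ∀ w : ℂ, a ≤ w.re → w.re ≤ b → c ≤ w.im → w.im ≤ d → DifferentiableAt ℂ g w)
    (hb : ∀ w : ℂ, a ≤ w.re → w.re ≤ b → c ≤ w.im → w.im ≤ d →
      (w.re = a ∨ w.re = b ∨ w.im = c ∨ w.im = d) → ‖g w‖ ≤ 1)
    {w : ℂ} (h1 : a ≤ w.re) (h2 : w.re ≤ b) (h3 : c ≤ w.im) (h4 : w.im ≤ d) : ‖g w‖ ≤ 1 := by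
  have hcl : closure (Ioo a b ×ℂ Ioo c d) = Icc a b ×ℂ Icc c d := by
    rw [Complex.closure_reProdIm, closure_Ioo hab.ne, closure_Ioo hcd.ne]
  refine Complex.norm_le_of_forall_mem_frontier_norm_le (U := Ioo a b ×ℂ Ioo c d) (C := 1)
    ?_ ?_ ?_ ?_
  · exact (Metric.isBounded_Ioo a b).reProdIm (Metric.isBounded_Ioo c d)
  · constructor
    · intro z hz
      obtain ⟨⟨p1, p2⟩, ⟨p3, p4⟩⟩ := hz
      exact (hg z p1.le p2.le p3.le p4.le).differentiableWithinAt
    · rw [hcl]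
      intro z hz
      obtain ⟨⟨p1, p2⟩, ⟨p3, p4⟩⟩ := hz
      exact (hg z p1 p2 p3 p4).continuousAt.continuousWithinAt
  · intro z hz
    rw [Complex.frontier_reProdIm, closure_Ioo hab.ne, closure_Ioo hcd.ne,
      frontier_Ioo hab, frontier_Ioo hcd] at hz
    rcases hz with ⟨⟨p1, p2⟩, q⟩ | ⟨q, ⟨p1, p2⟩⟩
    · rcases q with q | q
      · have q : z.im = c := q
        exact hb z p1 p2 q.ge (by linarith) (by tauto)
      · have q : z.im = d := q
        exact hb z p1 p2 (by linarith) q.le (by tauto)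
    · rcases q with q | q
      · have q : z.re = a := q
        exact hb z q.ge (by linarith) p1 p2 (by tauto)
      · have q : z.re = b := q
        exact hb z (by linarith) q.le p1 p2 (by tauto)
  · rw [hcl]; exact ⟨⟨h1, h2⟩, ⟨h3, h4⟩⟩

lemma V_left {a : ℝ} {w : ℂ} (h : w.re = (1 + a) / 2) : ‖chi (w - a)‖ = ‖chi w‖ := by
  rw [← norm_chi_conj w, ← chi_one_sub (w - a)]
  congr 2
  apply Complex.ext
  · simp; linarith
  · simp

lemma exp_tenth : Real.exp (1 / 10) ≤ 1.12 := by
  have h := Real.exp_one_lt_d9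
  have e : Real.exp (1 / 10) ^ 10 = Real.exp 1 := by rw [← Real.exp_nat_mul]; norm_num
  refine le_of_pow_le_pow_left₀ (n := 10) (by norm_num) (by norm_num) ?_
  rw [e]
  refine h.le.trans ?_
  norm_num

lemma quad_norm {x y L : ℝ} (hx : 0 ≤ x) (hL : 0 ≤ L) (hy : |y| ≤ L) :
    ‖((x : ℂ) + y * I) ^ 2 + (L : ℂ) ^ 2‖ ≤ L ^ 2 - y ^ 2 + x ^ 2 + 2 * x * L := by
  have e : ((x : ℂ) + y * I) ^ 2 + (L : ℂ) ^ 2 =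
      ((L ^ 2 - y ^ 2 + x ^ 2 : ℝ) : ℂ) + ((2 * x * y : ℝ) : ℂ) * I := by
    push_cast; linear_combination (y : ℂ) ^ 2 * I_sq
  have h1 : 0 ≤ L ^ 2 - y ^ 2 := by nlinarith [sq_abs y, abs_nonneg y]
  have h2 : ‖((2 * x * y : ℝ) : ℂ) * I‖ ≤ 2 * x * L := by
    rw [norm_mul, norm_I, mul_one, Complex.norm_real, Real.norm_eq_abs, abs_mul,
      abs_of_nonneg (by positivity : (0:ℝ) ≤ 2 * x)]
    gcongr
  have h3 : ‖((L ^ 2 - y ^ 2 + x ^ 2 : ℝ) : ℂ)‖ = L ^ 2 - y ^ 2 + x ^ 2 := by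
    rw [Complex.norm_real, Real.norm_eq_abs, abs_of_nonneg (by positivity)]
  rw [e]
  exact (norm_add_le _ _).trans (by rw [h3]; linarith)

lemma exp_norm_sq (η x y : ℝ) :
    ‖Complex.exp (η * ((x : ℂ) + y * I) ^ 2)‖ = Real.exp (η * (x ^ 2 - y ^ 2)) := by
  rw [Complex.norm_exp]
  congr 1
  have e : (η : ℂ) * ((x : ℂ) + y * I) ^ 2 =
      ((η * (x ^ 2 - y ^ 2) : ℝ) : ℂ) + ((η * (2 * x * y) : ℝ) : ℂ) * I := by
    push_cast; linear_combination (η : ℂ) * (y : ℂ) ^ 2 * I_sq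
  rw [e, Complex.add_re, Complex.re_ofReal_mul, Complex.ofReal_re]; simp

lemma horiz_real {C T L η c v Q x r i : ℝ} (hC : 1 ≤ C) (hT : 0 ≤ T)
    (hL : L = 4410 * (C + 4 * T + 5)) (hη : η = 1 / 4410) (hcp : 0 < c) (hv : 0 ≤ v) (_hQ0 : 0 ≤ Q)
    (hx0 : 0 ≤ x) (hx21 : x ≤ 21) (hQx : Q ≤ (r - 1) * L ^ 2)
    (hb : v * (r - 1) ≤ C * Real.exp (4 * i) * c) (hi1 : i ≤ L + T) (hL0 : 22050 ≤ L) :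
    v / c * (Q / L ^ 2) * Real.exp (η * (x ^ 2 - L ^ 2)) ≤ 1 := by
  have hCe : C ≤ Real.exp C := by linarith [Real.add_one_le_exp C]
  have h8 : v / c * (Q / L ^ 2) ≤ Real.exp (C + 4 * (L + T)) := by
    have h9 : Q / L ^ 2 ≤ r - 1 := by
      rw [div_le_iff₀ (by positivity)]; exact hQx
    calc _ ≤ v / c * (r - 1) := by gcongr
      _ = v * (r - 1) / c := by ring
      _ ≤ C * Real.exp (4 * i) := by
          rw [div_le_iff₀ hcp]; exact hb
      _ ≤ Real.exp C * Real.exp (4 * (L + T)) := by gcongr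
      _ = _ := by rw [← Real.exp_add]
  calc _ ≤ Real.exp (C + 4 * (L + T)) * Real.exp (η * (x ^ 2 - L ^ 2)) := by gcongr
    _ = Real.exp (C + 4 * (L + T) + η * (x ^ 2 - L ^ 2)) := by rw [← Real.exp_add]
    _ ≤ 1 := by
        rw [Real.exp_le_one_iff]
        have e : η * L ^ 2 = (C + 4 * T + 5) * L := by
          rw [hη, sq, ← mul_assoc]; congr 1; rw [hL]; ring
        have e2 : x ^ 2 ≤ 441 := by nlinarith
        have e3 : η * x ^ 2 ≤ 1 := by rw [hη]; linarith
        have e4 : C + 4 * T + 1 ≤ (C + 4 * T + 1) * L :=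
          le_mul_of_one_le_right (by linarith) (by linarith)
        have e5 : η * (x ^ 2 - L ^ 2) = η * x ^ 2 - (C + 4 * T + 5) * L := by rw [mul_sub, e]
        rw [e5]
        linarith

set_option maxHeartbeats 2000000 in
lemma V_le {a : ℝ} (ha1 : 1 ≤ a) (ha2 : a ≤ 2)
    (hright : ∀ w : ℂ, 22 ≤ w.re → ‖chi (w - a)‖ ^ 2 ≤ 1 / 2 * ‖chi w‖ ^ 2)
    {w : ℂ} (hw : (1 + a) / 2 ≤ w.re) : ‖chi (w - a)‖ ≤ ‖chi w‖ := by
  rcases le_or_gt 22 w.re with h22 | h22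
  · have := hright w h22
    exact le_of_pow_le_pow_left₀ two_ne_zero (norm_nonneg _) (by nlinarith [sq_nonneg ‖chi w‖])
  obtain ⟨C, hC, hh⟩ := horiz_bound
  set m : ℝ := (1 + a) / 2 with hm
  set t := w.im with ht
  have hm1 : 1 ≤ m := by linarith
  have hT := abs_nonneg t
  set L : ℝ := 4410 * (C + 4 * |t| + 5) with hL
  have hL0 : 22050 ≤ L := by linarith
  have hLT : |t| + 2 ≤ L := by linarith
  set η : ℝ := 1 / 4410 with hη
  clear_value m t L η
  let z : ℂ → ℂ := fun u => (((u.re - m : ℝ) : ℂ) + ((u.im - t : ℝ) : ℂ) * I)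
  have hz : ∀ u, z u = u - m - t * I := by
    intro u
    apply Complex.ext <;> simp [z]
  let g : ℂ → ℂ := fun u => chi (u - a) / chi u * (((u - m - t * I) ^ 2 + (L : ℂ) ^ 2) / (L : ℂ) ^ 2) *
    Complex.exp (η * (u - m - t * I) ^ 2)
  have hne : ∀ u : ℂ, m ≤ u.re → chi u ≠ 0 := fun u hu => chi_ne_zero (by linarith)
  have hgn : ∀ u : ℂ, ‖g u‖ = ‖chi (u - a)‖ / ‖chi u‖ *
      (‖(((u.re - m : ℝ) : ℂ) + ((u.im - t : ℝ) : ℂ) * I) ^ 2 + (L : ℂ) ^ 2‖ / L ^ 2) *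
      Real.exp (η * ((u.re - m) ^ 2 - (u.im - t) ^ 2)) := by
    intro u
    have e := hz u
    simp only [z] at e
    simp only [g, ← e, norm_mul, norm_div, exp_norm_sq]
    congr 3
    rw [norm_pow, Complex.norm_real, Real.norm_eq_abs, sq_abs]
  have key : ‖g w‖ ≤ 1 := by
    refine rect_max (a := m) (b := 22) (c := t - L) (d := t + L) (by linarith) (by linarith)
      ?_ ?_ hw h22.le (by linarith) (by linarith)
    · intro u h1 h2 h3 h4
      have := hne u h1
      have d1 : DifferentiableAt ℂ (fun u => chi (u - a)) u :=
        (chi_differentiable.comp (differentiable_id.sub_const (a : ℂ))) u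
      have d2 := chi_differentiable u
      refine ((d1.div d2 this).mul ?_).mul ?_
      · fun_prop
      · fun_prop
    · intro u h1 h2 h3 h4 h5
      have hcp : 0 < ‖chi u‖ := norm_pos_iff.2 (hne u h1)
      rw [hgn u]
      set x := u.re - m with hx
      set y := u.im - t with hy
      have hx0 : 0 ≤ x := by linarith
      have hx21 : x ≤ 21 := by linarith
      have hyL : |y| ≤ L := abs_le.2 ⟨by linarith, by linarith⟩
      have hq := quad_norm hx0 (by linarith) hyL
      set Q := ‖((x : ℂ) + (y : ℂ) * I) ^ 2 + (L : ℂ) ^ 2‖ with hQ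
      have hQ0 : 0 ≤ Q := norm_nonneg _
      by_cases h6 : u.re = m
      · have hx' : x = 0 := by linarith
        rw [V_left (h6.trans hm), div_self hcp.ne', one_mul, hx']
        have h7 : Q / L ^ 2 ≤ 1 := by
          rw [div_le_one (by positivity)]; rw [hx'] at hq; nlinarith [sq_nonneg y]
        have h8 : Real.exp (η * (0 ^ 2 - y ^ 2)) ≤ 1 := by
          rw [Real.exp_le_one_iff, hη]; nlinarith [sq_nonneg y]
        exact mul_le_one₀ h7 (Real.exp_nonneg _) h8
      by_cases h7 : u.re = 22
      · have h8 := hright u h7.ge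
        have h9 : ‖chi (u - a)‖ / ‖chi u‖ ≤ 0.7072 := by
          rw [div_le_iff₀ hcp]
          refine le_of_pow_le_pow_left₀ two_ne_zero (by positivity) ?_
          nlinarith [sq_nonneg ‖chi u‖]
        have h10 : Q / L ^ 2 ≤ 1.21 := by
          rw [div_le_iff₀ (by positivity)]
          nlinarith [sq_nonneg y]
        have h11 : Real.exp (η * (x ^ 2 - y ^ 2)) ≤ 1.12 := by
          refine le_trans (Real.exp_le_exp.2 ?_) exp_tenth
          have : x ^ 2 ≤ 441 := by nlinarith
          rw [hη]; nlinarith [sq_nonneg y]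
        have h12 : (0.7072 * 1.21 * 1.12 : ℝ) ≤ 1 := by norm_num
        refine le_trans ?_ h12
        gcongr
      · have hy2 : y ^ 2 = L ^ 2 := by
          have : y = -L ∨ y = L := by
            rcases h5 with h | h | h | h
            · exact absurd h h6
            · exact absurd h h7
            · left; linarith
            · right; linarith
          rcases this with h | h <;> rw [h] <;> ring
        have hyabs : |y| = L := by
          rw [← sq_eq_sq₀ (abs_nonneg _) (by linarith), sq_abs, hy2]
        have hu1 : 1 < u.re := by
          rcases lt_or_eq_of_le h1 with h | h
          · linarith
          · exact absurd h.symm h6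
        have him : u.im = y + t := by rw [hy]; ring
        have hi1 : |u.im| ≤ L + |t| := by rw [him, ← hyabs]; exact abs_add_le _ _
        have hi2 : 2 ≤ |u.im| := by
          have := abs_sub (y + t) t
          have h' : |y| ≤ |y + t| + |t| := by simpa using this
          rw [him]; linarith
        have hb := hh a ha1 ha2 u hu1 h2 hi2
        have hQx : Q ≤ (u.re - 1) * L ^ 2 := by
          have : Q ≤ x * (x + 2 * L) := by rw [hy2] at hq; linarith
          have h8 : x * (x + 2 * L) ≤ x * L ^ 2 := by
            have e : 22050 * L ≤ L ^ 2 := by rw [sq]; gcongr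
            gcongr; linarith
          have h9 : x * L ^ 2 ≤ (u.re - 1) * L ^ 2 := by
            gcongr; linarith
          linarith
        rw [hy2]
        exact horiz_real hC hT hL hη hcp (norm_nonneg _) hQ0 hx0 hx21 hQx hb hi1 (by linarith)
  have hcp : 0 < ‖chi w‖ := norm_pos_iff.2 (hne w hw)
  rw [hgn w] at key
  set x := w.re - m with hx
  have e : ((x : ℂ) + ((w.im - t : ℝ) : ℂ) * I) ^ 2 + (L : ℂ) ^ 2 = ((x ^ 2 + L ^ 2 : ℝ) : ℂ) := by
    rw [← ht, sub_self]; push_cast; ring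
  rw [e, Complex.norm_real, Real.norm_eq_abs, abs_of_nonneg (by positivity), ← ht, sub_self] at key
  have k1 : 1 ≤ (x ^ 2 + L ^ 2) / L ^ 2 := by
    rw [one_le_div (by positivity)]; nlinarith [sq_nonneg x]
  have k2 : 1 ≤ Real.exp (η * (x ^ 2 - 0 ^ 2)) := Real.one_le_exp (by
    have : 0 < η := by rw [hη]; norm_num
    have : 0 ≤ x ^ 2 := by positivity
    simp only [ne_eq, OfNat.ofNat_ne_zero, not_false_eq_true, zero_pow, sub_zero]; positivity)
  have k3 : ‖chi (w - a)‖ / ‖chi w‖ ≤ 1 := by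
    refine le_trans ?_ key
    have : 0 ≤ ‖chi (w - a)‖ / ‖chi w‖ := by positivity
    calc _ = ‖chi (w - a)‖ / ‖chi w‖ * 1 * 1 := by ring
      _ ≤ _ := by gcongr
  rwa [div_le_one hcp] at k3

lemma right1 {w : ℂ} (hw : 21 ≤ w.re) : ‖chi (w - 1)‖ ^ 2 ≤ 1 / 2 * ‖chi w‖ ^ 2 := by
  have h := V_bound (w := w) (by linarith)
  have h2 : 20 ≤ ‖w - 1‖ := by
    have := Complex.re_le_norm (w - 1); simp at this; linarith
  nlinarith [sq_nonneg ‖chi (w - 1)‖]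

lemma V1_le {w : ℂ} (hw : 1 ≤ w.re) : ‖chi (w - 1)‖ ≤ ‖chi w‖ := by
  have := V_le (a := 1) le_rfl (by norm_num) (fun w hw => by
    simpa using right1 (w := w) (by linarith)) (w := w) (by linarith)
  simpa using this

lemma V2_le {w : ℂ} (hw : 3 / 2 ≤ w.re) : ‖chi (w - 2)‖ ≤ ‖chi w‖ := by
  have := V_le (a := 2) (by norm_num) le_rfl (fun w hw => by
    have h1 := right1 (w := w) (by linarith)
    have h2 := right1 (w := w - 1) (by simp; linarith)
    have e : w - 1 - 1 = w - (2 : ℝ) := by push_cast; ring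
    rw [e] at h2
    nlinarith [sq_nonneg ‖chi w‖]) (w := w) (by linarith)
  simpa using this

lemma nle {u v : ℂ} {c : ℝ} (hc : 0 ≤ c)
    (h : u.re ^ 2 + u.im ^ 2 ≤ c ^ 2 * (v.re ^ 2 + v.im ^ 2)) : ‖u‖ ≤ c * ‖v‖ := by
  refine le_of_pow_le_pow_left₀ two_ne_zero (by positivity) ?_
  rw [mul_pow, Complex.sq_norm, Complex.sq_norm, Complex.normSq_apply, Complex.normSq_apply]
  linarith

lemma nge {u : ℂ} {c : ℝ} (h : c ^ 2 ≤ u.re ^ 2 + u.im ^ 2) : c ≤ ‖u‖ := by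
  refine le_of_pow_le_pow_left₀ two_ne_zero (norm_nonneg _) ?_
  rw [Complex.sq_norm, Complex.normSq_apply]
  linarith

lemma V_num {w : ℂ} {r c : ℝ} (hw : 5 ≤ w.re) (hr : 0 < r) (hc : 0 ≤ c)
    (h1 : r ^ 2 ≤ (w.re - 1) ^ 2 + w.im ^ 2) (h2 : 10 ≤ c ^ 2 * r) :
    ‖chi (w - 1)‖ ≤ c * ‖chi w‖ := by
  have h := V_bound hw
  have h3 : r ≤ ‖w - 1‖ := nge (by simpa using h1)
  refine le_of_pow_le_pow_left₀ two_ne_zero (by positivity) ?_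
  rw [mul_pow]
  have h4 : ‖chi (w - 1)‖ ^ 2 * r ≤ c ^ 2 * ‖chi w‖ ^ 2 * r := by
    calc _ ≤ ‖chi (w - 1)‖ ^ 2 * ‖w - 1‖ := by gcongr
      _ ≤ 10 * ‖chi w‖ ^ 2 := h
      _ ≤ (c ^ 2 * r) * ‖chi w‖ ^ 2 := by gcongr
      _ = _ := by ring
  exact le_of_mul_le_mul_right h4 hr

noncomputable def al : ℝ := Real.pi / 3 - 1

lemma A_eq : A = (al : ℂ) := by simp [A, al]

lemma al_lo : 0.0471 ≤ al := by unfold al; linarith [Real.pi_gt_d4]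
lemma al_hi : al ≤ 0.0472 := by unfold al; linarith [Real.pi_lt_d4]

lemma f1_lower (s : ℂ) : ‖s - 1‖ * (‖s - 1‖ * ‖3 * s - 2‖ * ‖A * s - A + 1‖ * ‖chi (s + 1)‖ * ‖chi (3 * s)‖
    - ‖s + 1‖ * ‖s - 2‖ * ‖chi s‖ * ‖chi (3 * s - 1)‖
    - 2 * ‖s - 1‖ * ‖s - 2‖ * ‖chi s‖ * ‖chi (3 * s)‖) ≤ ‖f1 s‖ := by
  unfold f1
  rw [norm_mul]
  gcongr
  refine le_trans ?_ (norm_sub_norm_le _ _)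
  have h := norm_sub_norm_le ((s - 1) * (3 * s - 2) * (A * s - A + 1) * chi (s + 1) * chi (3 * s))
    ((s + 1) * (s - 2) * chi s * chi (3 * s - 1))
  have e : ‖(2 : ℂ)‖ = 2 := by simp
  simp only [norm_mul, e] at h ⊢
  linarith

lemma f1_upper (s : ℂ) : ‖f1 (1 - s)‖ ≤ ‖s‖ * (‖s‖ * ‖3 * s - 1‖ * ‖1 - A * s‖ * ‖chi (s - 1)‖ * ‖chi (3 * s - 2)‖
    + ‖s + 1‖ * ‖s - 2‖ * ‖chi s‖ * ‖chi (3 * s - 1)‖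
    + 2 * ‖s‖ * ‖s + 1‖ * ‖chi s‖ * ‖chi (3 * s - 2)‖) := by
  have c1 : chi (1 - s + 1) = chi (s - 1) := by rw [← chi_one_sub (s - 1)]; congr 1; ring
  have c2 : chi (3 * (1 - s)) = chi (3 * s - 2) := by rw [← chi_one_sub (3 * s - 2)]; congr 1; ring
  have c3 : chi (3 * (1 - s) - 1) = chi (3 * s - 1) := by
    rw [← chi_one_sub (3 * s - 1)]; congr 1; ring
  have e : f1 (1 - s) = s * (- (s * (3 * s - 1) * (1 - A * s) * chi (s - 1) * chi (3 * s - 2))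
    + (s + 1) * (s - 2) * chi s * chi (3 * s - 1)
    + (2 * s * (s + 1) * chi s * chi (3 * s - 2))) := by
    unfold f1
    rw [c1, c2, c3, chi_one_sub]
    ring
  rw [e, norm_mul]
  gcongr
  refine (norm_add_le _ _).trans ?_
  have h := norm_add_le (- (s * (3 * s - 1) * (1 - A * s) * chi (s - 1) * chi (3 * s - 2)))
    ((s + 1) * (s - 2) * chi s * chi (3 * s - 1))
  have e : ‖(2 : ℂ)‖ = 2 := by simp
  simp only [norm_neg, norm_mul, e] at h ⊢
  linarith

lemma N_re (s : ℂ) : (A * s - A + 1).re = al * s.re - al + 1 := by rw [A_eq]; simp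
lemma N_im (s : ℂ) : (A * s - A + 1).im = al * s.im := by rw [A_eq]; simp

lemma N_le {s : ℂ} (hs : 1 / 2 ≤ s.re) : ‖1 - A * s‖ ≤ ‖A * s - A + 1‖ := by
  have h := nle (u := 1 - A * s) (v := A * s - A + 1) (c := 1) zero_le_one (by
    rw [N_re, N_im, A_eq]
    simp
    have h1 := al_lo
    have h2 := al_hi
    have : 0 ≤ al * (2 * s.re - 1) * (2 - al) := by
      apply mul_nonneg (mul_nonneg _ _) <;> linarith
    nlinarith)
  linarith

lemma sq15 {t : ℝ} (h : 15 ≤ |t|) : 225 ≤ t ^ 2 := by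
  rw [← sq_abs]; nlinarith

set_option maxHeartbeats 2000000 in
lemma f1_strip {s : ℂ} (h1 : 1 / 2 ≤ s.re) (h2 : s.re ≤ 4) (ht : 15 ≤ |s.im|) :
    0 < ‖f1 s‖ ∧ ‖f1 (1 - s)‖ ≤ 64 * ‖f1 s‖ := by
  have ht2 := sq15 ht
  have hl := f1_lower s
  have hu := f1_upper s
  have hN := N_le h1
  have a1 := al_lo
  have a2 := al_hi
  have hN2 : 1.2 ≤ ‖A * s - A + 1‖ := by
    apply nge
    rw [N_re, N_im]
    have e1 : 0.0471 ^ 2 * 225 ≤ al ^ 2 * s.im ^ 2 := by gcongr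
    have e2 : 0.9764 ≤ al * s.re - al + 1 := by nlinarith
    have e3 : 0.9764 ^ 2 ≤ (al * s.re - al + 1) ^ 2 := by gcongr
    rw [mul_pow]
    norm_num at e1 e3 ⊢
    linarith
  have p0 : 15 ≤ ‖s - 1‖ := nge (by simp; nlinarith [sq_nonneg (s.re - 1)])
  have q1 : 2.99 * ‖s - 1‖ ≤ ‖3 * s - 2‖ := by
    have := nle (u := s - 1) (v := 3 * s - 2) (c := 1 / 2.99) (by norm_num) (by
      simp; norm_num; nlinarith [sq_nonneg (s.re - 1)])
    norm_num at this ⊢; linarith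
  have q2 : ‖s - 2‖ ≤ 1.005 * ‖s - 1‖ := nle (by norm_num) (by
    simp; norm_num; nlinarith [sq_nonneg (s.re - 1)])
  have q3 : ‖s + 1‖ ≤ 1.04 * ‖s - 1‖ := nle (by norm_num) (by
    simp; norm_num; nlinarith [sq_nonneg (s.re)])
  have q4 : ‖s‖ ≤ 1.03 * ‖s - 1‖ := nle (by norm_num) (by
    simp; norm_num; nlinarith [sq_nonneg (s.re)])
  have q5 : ‖3 * s - 1‖ ≤ 3.05 * ‖s - 1‖ := nle (by norm_num) (by
    simp; norm_num; nlinarith [sq_nonneg (s.re)])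
  have v1 : ‖chi s‖ ≤ ‖chi (s + 1)‖ := by
    have := V1_le (w := s + 1) (by simp; linarith); simpa using this
  have v2 : ‖chi (s - 1)‖ ≤ ‖chi (s + 1)‖ := by
    have := V2_le (w := s + 1) (by simp; linarith)
    rwa [show s + 1 - 2 = s - 1 by ring] at this
  have v3 : ‖chi (3 * s - 1)‖ ≤ ‖chi (3 * s)‖ := V1_le (by simp; linarith)
  have v4 : ‖chi (3 * s - 2)‖ ≤ ‖chi (3 * s)‖ := V2_le (by simp; linarith)
  have X0 : 0 < ‖chi (s + 1)‖ := norm_pos_iff.2 (chi_ne_zero (by simp; linarith))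
  have Y0 : 0 < ‖chi (3 * s)‖ := norm_pos_iff.2 (chi_ne_zero (by simp; linarith))
  generalize ‖chi (s + 1)‖ = X at *
  generalize ‖chi (3 * s)‖ = Y at *
  generalize ‖A * s - A + 1‖ = N at *
  generalize ‖s - 1‖ = p at *
  have M0 : 0 < p ^ 2 * X * Y := by positivity
  have m1 : (2.99 * N) * (p ^ 2 * X * Y) ≤ p * ‖3 * s - 2‖ * N * X * Y := by
    calc _ = p * (2.99 * p) * N * X * Y := by ring
      _ ≤ _ := by gcongr
  have m2 : ‖s + 1‖ * ‖s - 2‖ * ‖chi s‖ * ‖chi (3 * s - 1)‖ ≤ (1.04 * 1.005) * (p ^ 2 * X * Y) := by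
    calc _ ≤ (1.04 * p) * (1.005 * p) * X * Y := by gcongr
      _ = _ := by ring
  have m3 : 2 * p * ‖s - 2‖ * ‖chi s‖ * Y ≤ (2 * 1.005) * (p ^ 2 * X * Y) := by
    calc _ ≤ 2 * p * (1.005 * p) * X * Y := by gcongr
      _ = _ := by ring
  have m4 : ‖s‖ * ‖3 * s - 1‖ * ‖1 - A * s‖ * ‖chi (s - 1)‖ * ‖chi (3 * s - 2)‖ ≤
      (1.03 * 3.05 * N) * (p ^ 2 * X * Y) := by
    calc _ ≤ (1.03 * p) * (3.05 * p) * N * X * Y := by gcongr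
      _ = _ := by ring
  have m5 : 2 * ‖s‖ * ‖s + 1‖ * ‖chi s‖ * ‖chi (3 * s - 2)‖ ≤
      (2 * 1.03 * 1.04) * (p ^ 2 * X * Y) := by
    calc _ ≤ 2 * (1.03 * p) * (1.04 * p) * X * Y := by gcongr
      _ = _ := by ring
  generalize p ^ 2 * X * Y = M at *
  have lo : p * (0.44 * N * M) ≤ ‖f1 s‖ := by
    refine le_trans ?_ hl
    gcongr
    nlinarith
  have up : ‖f1 (1 - s)‖ ≤ p * (6 * N * M) := by
    refine hu.trans ?_
    calc _ ≤ (1.03 * p) * (5.8 * N * M) := by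
          gcongr
          nlinarith
      _ ≤ _ := by
        have : 0 < p * N * M := by positivity
        nlinarith
  have hP : 0 < p * N * M := by positivity
  constructor
  · nlinarith
  · nlinarith

set_option maxHeartbeats 2000000 in
lemma f1_right {s : ℂ} (h1 : 4 ≤ s.re) (h2 : s.re ≤ 20) (ht : 15 ≤ |s.im|) :
    0 < ‖f1 s‖ ∧ ‖chi (2 * s - 1)‖ * ‖f1 (1 - s)‖ ≤ 1 / 2 * (‖chi (2 * s)‖ * ‖f1 s‖) := by
  have ht2 := sq15 ht
  have hl := f1_lower s
  have hu := f1_upper s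
  have hN := N_le (s := s) (by linarith)
  have a1 := al_lo
  have a2 := al_hi
  have hN2 : 1.34 ≤ ‖A * s - A + 1‖ := by
    apply nge
    rw [N_re, N_im]
    have e1 : 0.0471 ^ 2 * 225 ≤ al ^ 2 * s.im ^ 2 := by gcongr
    have e2 : 1.1413 ≤ al * s.re - al + 1 := by nlinarith
    have e3 : 1.1413 ^ 2 ≤ (al * s.re - al + 1) ^ 2 := by gcongr
    rw [mul_pow]
    norm_num at e1 e3 ⊢
    linarith
  have p0 : 15 ≤ ‖s - 1‖ := nge (by simp; nlinarith [sq_nonneg (s.re - 1)])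
  have q1 : 3 * ‖s - 1‖ ≤ ‖3 * s - 2‖ := by
    have := nle (u := s - 1) (v := 3 * s - 2) (c := 1 / 3) (by norm_num) (by
      simp; norm_num; nlinarith [sq_nonneg (s.re - 1)])
    norm_num at this ⊢; linarith
  have q2 : ‖s - 2‖ ≤ ‖s - 1‖ := by
    have : ‖s - 2‖ ≤ 1 * ‖s - 1‖ := nle (by norm_num) (by
      simp; nlinarith [sq_nonneg (s.re - 1)])
    linarith
  have q3 : ‖s + 1‖ ≤ 1.07 * ‖s - 1‖ := nle (by norm_num) (by
    simp; norm_num; nlinarith [sq_nonneg (s.re - 15)])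
  have q4 : ‖s‖ ≤ 1.035 * ‖s - 1‖ := nle (by norm_num) (by
    simp; norm_num; nlinarith [sq_nonneg (s.re - 15)])
  have q5 : ‖3 * s - 1‖ ≤ 3.07 * ‖s - 1‖ := nle (by norm_num) (by
    simp; norm_num; nlinarith [sq_nonneg (s.re - 15)])
  have v1 : ‖chi s‖ ≤ 0.803 * ‖chi (s + 1)‖ := by
    have := V_num (w := s + 1) (r := 15.51) (c := 0.803) (by simp; linarith) (by norm_num)
      (by norm_num) (by simp; norm_num; nlinarith) (by norm_num)
    simpa using this
  have v2 : ‖chi (s - 1)‖ ≤ 0.803 * ‖chi (s + 1)‖ := (V1_le (by linarith)).trans v1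
  have v3 : ‖chi (3 * s - 1)‖ ≤ 0.47 * ‖chi (3 * s)‖ :=
    V_num (r := 46) (by simp; linarith) (by norm_num)
      (by norm_num) (by simp; norm_num; nlinarith) (by norm_num)
  have v4 : ‖chi (3 * s - 2)‖ ≤ 0.2209 * ‖chi (3 * s)‖ := by
    have := V_num (w := 3 * s - 1) (r := 46) (c := 0.47) (by simp; linarith) (by norm_num)
      (by norm_num) (by simp; norm_num; nlinarith) (by norm_num)
    rw [show 3 * s - 1 - 1 = 3 * s - 2 by ring] at this
    linarith
  have v5 : ‖chi (2 * s - 1)‖ ≤ 0.57 * ‖chi (2 * s)‖ :=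
    V_num (r := 30.8) (by simp; linarith) (by norm_num)
      (by norm_num) (by simp; norm_num; nlinarith) (by norm_num)
  have X0 : 0 < ‖chi (s + 1)‖ := norm_pos_iff.2 (chi_ne_zero (by simp; linarith))
  have Y0 : 0 < ‖chi (3 * s)‖ := norm_pos_iff.2 (chi_ne_zero (by simp; linarith))
  have R0 : 0 < ‖chi (2 * s)‖ := norm_pos_iff.2 (chi_ne_zero (by simp; linarith))
  generalize ‖chi (s + 1)‖ = X at *
  generalize ‖chi (3 * s)‖ = Y at *
  generalize ‖chi (2 * s)‖ = R at *
  generalize ‖A * s - A + 1‖ = N at *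
  generalize ‖s - 1‖ = p at *
  have M0 : 0 < p ^ 2 * X * Y := by positivity
  have m1 : (3 * N) * (p ^ 2 * X * Y) ≤ p * ‖3 * s - 2‖ * N * X * Y := by
    calc _ = p * (3 * p) * N * X * Y := by ring
      _ ≤ _ := by gcongr
  have m2 : ‖s + 1‖ * ‖s - 2‖ * ‖chi s‖ * ‖chi (3 * s - 1)‖ ≤
      (1.07 * 0.803 * 0.47) * (p ^ 2 * X * Y) := by
    calc _ ≤ (1.07 * p) * p * (0.803 * X) * (0.47 * Y) := by gcongr
      _ = _ := by ring
  have m3 : 2 * p * ‖s - 2‖ * ‖chi s‖ * Y ≤ (2 * 0.803) * (p ^ 2 * X * Y) := by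
    calc _ ≤ 2 * p * p * (0.803 * X) * Y := by gcongr
      _ = _ := by ring
  have m4 : ‖s‖ * ‖3 * s - 1‖ * ‖1 - A * s‖ * ‖chi (s - 1)‖ * ‖chi (3 * s - 2)‖ ≤
      (1.035 * 3.07 * 0.803 * 0.2209 * N) * (p ^ 2 * X * Y) := by
    calc _ ≤ (1.035 * p) * (3.07 * p) * N * (0.803 * X) * (0.2209 * Y) := by gcongr
      _ = _ := by ring
  have m5 : 2 * ‖s‖ * ‖s + 1‖ * ‖chi s‖ * ‖chi (3 * s - 2)‖ ≤
      (2 * 1.035 * 1.07 * 0.803 * 0.2209) * (p ^ 2 * X * Y) := by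
    calc _ ≤ 2 * (1.035 * p) * (1.07 * p) * (0.803 * X) * (0.2209 * Y) := by gcongr
      _ = _ := by ring
  generalize p ^ 2 * X * Y = M at *
  have hNM : 1.34 * M ≤ N * M := by gcongr
  have lo : p * (1.5 * N * M) ≤ ‖f1 s‖ := by
    refine le_trans ?_ hl
    gcongr
    linarith
  have up : ‖f1 (1 - s)‖ ≤ p * (1.22 * N * M) := by
    refine hu.trans ?_
    calc _ ≤ (1.035 * p) * (1.165 * N * M) := by
          gcongr
          linarith
      _ ≤ _ := by
        have : 0 < p * N * M := by positivity
        linarith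
  have hP : 0 < p * N * M := by positivity
  constructor
  · linarith
  · calc _ ≤ (0.57 * R) * (p * (1.22 * N * M)) := by gcongr
      _ ≤ 1 / 2 * (R * (p * (1.5 * N * M))) := by
        have : 0 < R * (p * N * M) := by positivity
        linarith
      _ ≤ _ := by gcongr

lemma f1_conj (s : ℂ) : f1 (conj s) = conj (f1 s) := by
  have e3 : conj (3 : ℂ) = 3 := map_ofNat _ 3
  have e2 : conj (2 : ℂ) = 2 := map_ofNat _ 2
  have c1 : chi (conj s + 1) = conj (chi (s + 1)) := by rw [← chi_conj]; simp [e3]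
  have c2 : chi (3 * conj s) = conj (chi (3 * s)) := by rw [← chi_conj]; simp [e3]
  have c3 : chi (3 * conj s - 1) = conj (chi (3 * s - 1)) := by rw [← chi_conj]; simp [e3]
  unfold f1
  rw [c1, c2, c3, chi_conj, A_eq]
  simp [e3, e2]

lemma f1_differentiable : Differentiable ℂ f1 := by
  have h := chi_differentiable
  have h1 : Differentiable ℂ fun s : ℂ => chi (s + 1) := h.comp (by fun_prop)
  have h2 : Differentiable ℂ fun s : ℂ => chi (3 * s) := h.comp (by fun_prop)
  have h3 : Differentiable ℂ fun s : ℂ => chi (3 * s - 1) := h.comp (by fun_prop)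
  unfold f1
  fun_prop

lemma exp_a : Real.exp (0.054 * 3.5 ^ 2) ≤ 2 := by
  have := Real.log_two_gt_d9
  calc _ ≤ Real.exp (Real.log 2) := Real.exp_le_exp.2 (by norm_num at this ⊢; linarith)
    _ = 2 := Real.exp_log (by norm_num)

lemma exp_b : Real.exp (0.054 * (3.5 ^ 2 - 10 ^ 2)) ≤ 1 / 64 := by
  have := Real.log_two_lt_d9
  have e : Real.log (1 / 64) = - (6 * Real.log 2) := by
    rw [one_div, Real.log_inv, show (64 : ℝ) = 2 ^ 6 by norm_num, Real.log_pow]; norm_num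
  calc _ ≤ Real.exp (Real.log (1 / 64)) :=
        Real.exp_le_exp.2 (by rw [e]; norm_num at this ⊢; linarith)
    _ = 1 / 64 := Real.exp_log (by norm_num)

set_option maxHeartbeats 2000000 in
lemma strip_lt {s : ℂ} (h1 : 1 / 2 < s.re) (h2 : s.re < 4) (ht : 25 ≤ |s.im|) :
    ‖chi (2 * s - 1) * f1 (1 - s)‖ < ‖chi (2 * s) * f1 s‖ := by
  set t := s.im with htd
  clear_value t
  have him : ∀ u : ℂ, t - 10 ≤ u.im → u.im ≤ t + 10 → 15 ≤ |u.im| := by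
    intro u p q
    rcases le_abs.1 ht with h | h
    · exact le_abs.2 (Or.inl (by linarith))
    · exact le_abs.2 (Or.inr (by linarith))
  let g : ℂ → ℂ := fun u => (chi (2 * u - 1) * f1 (1 - u)) / (chi (2 * u) * f1 u) *
    Complex.exp ((0.054 : ℝ) * (u - (1 / 2 : ℝ) - t * I) ^ 2)
  have hz : ∀ u : ℂ, u - (1 / 2 : ℝ) - t * I =
      (((u.re - 1 / 2 : ℝ) : ℂ) + ((u.im - t : ℝ) : ℂ) * I) := by
    intro u
    apply Complex.ext <;> simp
  have hgn : ∀ u : ℂ, ‖g u‖ = ‖chi (2 * u - 1)‖ * ‖f1 (1 - u)‖ / (‖chi (2 * u)‖ * ‖f1 u‖) *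
      Real.exp (0.054 * ((u.re - 1 / 2) ^ 2 - (u.im - t) ^ 2)) := by
    intro u
    simp only [g]
    rw [hz u, norm_mul, exp_norm_sq, norm_div, norm_mul, norm_mul]
  have hc : ∀ u : ℂ, 1 / 2 ≤ u.re → 0 < ‖chi (2 * u)‖ := fun u hu =>
    norm_pos_iff.2 (chi_ne_zero (by simp; linarith))
  have hst : t - 10 ≤ s.im := by linarith
  have hst' : s.im ≤ t + 10 := by linarith
  have key : ‖g s‖ ≤ 1 := by
    refine rect_max (a := 1 / 2) (b := 4) (c := t - 10) (d := t + 10) (by norm_num) (by linarith)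
      ?_ ?_ h1.le h2.le hst hst'
    · intro u k1 k2 k3 k4
      have n1 := norm_pos_iff.1 (hc u k1)
      have n2 := norm_pos_iff.1 (f1_strip k1 k2 (him u k3 k4)).1
      have d1 : DifferentiableAt ℂ (fun u : ℂ => chi (2 * u - 1)) u :=
        (chi_differentiable.comp (by fun_prop : Differentiable ℂ fun u : ℂ => 2 * u - 1)) u
      have d2 : DifferentiableAt ℂ (fun u : ℂ => chi (2 * u)) u :=
        (chi_differentiable.comp (by fun_prop : Differentiable ℂ fun u : ℂ => 2 * u)) u
      have d3 : DifferentiableAt ℂ (fun u : ℂ => f1 (1 - u)) u :=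
        (f1_differentiable.comp (by fun_prop : Differentiable ℂ fun u : ℂ => 1 - u)) u
      have d4 := f1_differentiable u
      refine ((d1.mul d3).div (d2.mul d4) (mul_ne_zero n1 n2)).mul ?_
      fun_prop
    · intro u k1 k2 k3 k4 k5
      have n1 := hc u k1
      obtain ⟨n2, n3⟩ := f1_strip k1 k2 (him u k3 k4)
      rw [hgn u]
      have y2 := sq_nonneg (u.im - t)
      by_cases k6 : u.re = 1 / 2
      · have e1 : ‖chi (2 * u - 1)‖ = ‖chi (2 * u)‖ := by
          have := V_left (a := 1) (w := 2 * u) (by simp; linarith)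
          simpa using this
        have e2 : 1 - u = conj u := by
          apply Complex.ext
          · simp; linarith
          · simp
        rw [e1, e2, f1_conj, Complex.norm_conj, div_self (by positivity), one_mul, k6,
          Real.exp_le_one_iff]
        linarith
      by_cases k7 : u.re = 4
      · obtain ⟨-, n4⟩ := f1_right (s := u) k7.ge (by linarith) (him u k3 k4)
        have e1 : ‖chi (2 * u - 1)‖ * ‖f1 (1 - u)‖ / (‖chi (2 * u)‖ * ‖f1 u‖) ≤ 1 / 2 := by
          rw [div_le_iff₀ (by positivity)]; exact n4
        have e2 : Real.exp (0.054 * ((u.re - 1 / 2) ^ 2 - (u.im - t) ^ 2)) ≤ 2 := by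
          refine le_trans (Real.exp_le_exp.2 ?_) exp_a
          rw [k7]; norm_num; linarith
        calc _ ≤ (1 / 2 : ℝ) * 2 := by gcongr
          _ = 1 := by norm_num
      · have y3 : (u.im - t) ^ 2 = 10 ^ 2 := by
          rcases k5 with h | h | h | h
          · exact absurd h k6
          · exact absurd h k7
          · rw [h]; ring
          · rw [h]; ring
        have e0 : ‖chi (2 * u - 1)‖ ≤ ‖chi (2 * u)‖ := V1_le (by simp; linarith)
        have e1 : ‖chi (2 * u - 1)‖ * ‖f1 (1 - u)‖ / (‖chi (2 * u)‖ * ‖f1 u‖) ≤ 64 := by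
          rw [div_le_iff₀ (by positivity)]
          calc _ ≤ ‖chi (2 * u)‖ * (64 * ‖f1 u‖) := by gcongr
            _ = _ := by ring
        have e2 : Real.exp (0.054 * ((u.re - 1 / 2) ^ 2 - (u.im - t) ^ 2)) ≤ 1 / 64 := by
          refine le_trans (Real.exp_le_exp.2 ?_) exp_b
          rw [y3]
          have : (u.re - 1 / 2) ^ 2 ≤ 3.5 ^ 2 := by
            apply pow_le_pow_left₀ <;> norm_num <;> linarith
          linarith
        calc _ ≤ (64 : ℝ) * (1 / 64) := by gcongr
          _ = 1 := by norm_num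
  have n1 := hc s h1.le
  have n2 := (f1_strip h1.le h2.le (him s hst hst')).1
  rw [hgn s, ← htd, sub_self] at key
  have e : 1 < Real.exp (0.054 * ((s.re - 1 / 2) ^ 2 - 0 ^ 2)) := by
    rw [Real.one_lt_exp_iff]
    have : 0 < (s.re - 1 / 2) ^ 2 := by
      have : 0 < s.re - 1 / 2 := by linarith
      positivity
    linarith
  rw [norm_mul, norm_mul, ← div_lt_one (by positivity)]
  have n0 : 0 ≤ ‖chi (2 * s - 1)‖ * ‖f1 (1 - s)‖ / (‖chi (2 * s)‖ * ‖f1 s‖) := by positivity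
  generalize ‖chi (2 * s - 1)‖ * ‖f1 (1 - s)‖ / (‖chi (2 * s)‖ * ‖f1 s‖) = q at *
  generalize Real.exp (0.054 * ((s.re - 1 / 2) ^ 2 - 0 ^ 2)) = E at *
  by_contra hq
  nlinarith

theorem Z1_no_zero_strip (s : ℂ) (h1 : 1 / 2 < s.re) (h2 : s.re < 20)
    (h3 : 25 ≤ |s.im|) : Z1 s ≠ 0 := by
  have key : ‖chi (2 * s - 1) * f1 (1 - s)‖ < ‖chi (2 * s) * f1 s‖ := by
    rcases lt_or_ge s.re 4 with h | h
    · exact strip_lt h1 h h3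
    · obtain ⟨k1, k2⟩ := f1_right h h2.le (by linarith)
      have k3 : 0 < ‖chi (2 * s)‖ := norm_pos_iff.2 (chi_ne_zero (by simp; linarith))
      have k4 : 0 < ‖chi (2 * s)‖ * ‖f1 s‖ := by positivity
      rw [norm_mul, norm_mul]
      linarith
  intro h
  have e : chi (2 * s) * f1 s = chi (2 * s - 1) * f1 (1 - s) := by
    unfold Z1 at h; exact sub_eq_zero.1 h
  rw [e] at key
  exact lt_irrefl _ key
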